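/- Let X₁,…,Xₙ be mutually independent random variables with finitely many values, let T be a random variable that is a deterministic function of Xⁿ=(X₁,…,Xₙ), let Aⁿ=(A₁,…,Aₙ) be a deterministic function of T, and let Yⁿ=(Y₁,…,Yₙ) be finite-valued random variables satisfying H(Yⁿ|(Aⁿ,Xⁿ)) = ∑ᵢ H(Yᵢ|(Aᵢ,Xᵢ)). Then H(T) ≥ ∑_{i=1}^{n} [ I(Xᵢ;Aᵢ) + I(Xᵢ;Uᵢ | Yᵢ,Aᵢ) ], where Uᵢ = (A^{n∖i}, Y^{n∖i}, X^{i−1}, T), with A^{n∖i} and Y^{n∖i} denoting all components except the i-th and X^{i−1}=(X₁,…,X_{i−1}). -/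

import Mathlib

open scoped BigOperators

set_option synthInstance.maxSize 512
set_option synthInstance.maxHeartbeats 1000000

noncomputable section

/-- Probability mass of the event `f = a` under the weight function `q` on a finite space. -/
def pmass {Ω α : Type*} [Fintype Ω] [DecidableEq α] (q : Ω → ℝ) (f : Ω → α) (a : α) : ℝ :=
  ∑ ω, if f ω = a then q ω else 0

/-- Shannon entropy (in bits) of the value of `f` under `q`. -/
def ent {Ω α : Type*} [Fintype Ω] [Fintype α] [DecidableEq α] (q : Ω → ℝ) (f : Ω → α) : ℝ :=
  -∑ a, pmass q f a * Real.logb 2 (pmass q f a)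

/-- Conditional Shannon entropy `H(f ∣ g)` (in bits). -/
def condEnt {Ω α β : Type*} [Fintype Ω] [Fintype α] [DecidableEq α] [Fintype β] [DecidableEq β]
    (q : Ω → ℝ) (f : Ω → α) (g : Ω → β) : ℝ :=
  ent q (fun ω => (f ω, g ω)) - ent q g

/-- Mutual information `I(f ; g)` (in bits). -/
def mutInf {Ω α β : Type*} [Fintype Ω] [Fintype α] [DecidableEq α] [Fintype β] [DecidableEq β]
    (q : Ω → ℝ) (f : Ω → α) (g : Ω → β) : ℝ :=
  ent q f + ent q g - ent q (fun ω => (f ω, g ω))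

/-- Conditional mutual information `I(f ; g ∣ h)` (in bits). -/
def condMutInf {Ω α β γ : Type*} [Fintype Ω] [Fintype α] [DecidableEq α] [Fintype β]
    [DecidableEq β] [Fintype γ] [DecidableEq γ]
    (q : Ω → ℝ) (f : Ω → α) (g : Ω → β) (h : Ω → γ) : ℝ :=
  condEnt q f h - condEnt q f (fun ω => (g ω, h ω))

/-- `q` is a probability mass function on `Ω`. -/
def IsPMF {Ω : Type*} [Fintype Ω] (q : Ω → ℝ) : Prop :=
  (∀ ω, 0 ≤ q ω) ∧ ∑ ω, q ω = 1

/-!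
The proof compares two expansions of the joint entropy. By the symmetry of mutual information, the
`i`-th summand is `H(Xᵢ) + H(Yᵢ|Aᵢ,Xᵢ) - H(Yᵢ|Aᵢ) - H(Xᵢ|X^{i-1},Yⁿ,T)`, since `T` determines `Aⁿ`.
Summing, independence, the channel hypothesis and the chain rule turn the first, second and last
terms into `H(Xⁿ)`, `H(Yⁿ|Aⁿ,Xⁿ)` and `H(Xⁿ|Yⁿ,T)`, while `∑ᵢ H(Yᵢ|Aᵢ) ≥ H(Yⁿ|T)` because
conditioning reduces entropy. What remains is at most
`H(Xⁿ) + H(Yⁿ|Aⁿ,Xⁿ) - H(Yⁿ|T) - H(Xⁿ|Yⁿ,T) = H(T)`, as both `H(Xⁿ) + H(Yⁿ|Aⁿ,Xⁿ)` and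
`H(T) + H(Yⁿ|T) + H(Xⁿ|Yⁿ,T)` are the entropy of all variables together.
-/

section Mass

variable {Ω α β : Type*} [Fintype Ω] [DecidableEq α] [DecidableEq β] {q : Ω → ℝ}

theorem pmass_nonneg (hq : ∀ ω, 0 ≤ q ω) (f : Ω → α) (a : α) : 0 ≤ pmass q f a :=
  Finset.sum_nonneg fun ω _ => by split_ifs <;> simp [hq ω]

theorem pmass_apply_pos (hq : ∀ ω, 0 ≤ q ω) (f : Ω → α) {ω : Ω} (hω : 0 < q ω) :
    0 < pmass q f (f ω) :=
  Finset.sum_pos' (fun ω' _ => by split_ifs <;> simp [hq ω'])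
    ⟨ω, Finset.mem_univ ω, by simpa using hω⟩

variable [Fintype α]

theorem sum_mul_comp_eq_sum_pmass_mul (q : Ω → ℝ) (f : Ω → α) (F : α → ℝ) :
    ∑ ω, q ω * F (f ω) = ∑ a, pmass q f a * F a := by
  simp only [pmass, Finset.sum_mul]
  rw [Finset.sum_comm]
  simp [ite_mul]

theorem sum_pmass (q : Ω → ℝ) (f : Ω → α) : ∑ a, pmass q f a = ∑ ω, q ω := by
  simpa using (sum_mul_comp_eq_sum_pmass_mul q f fun _ => 1).symm

theorem sum_pmass_prodMk (q : Ω → ℝ) (f : Ω → α) (g : Ω → β) (b : β) :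
    ∑ a, pmass q (fun ω => (f ω, g ω)) (a, b) = pmass q g b := by
  simp only [pmass]
  rw [Finset.sum_comm]
  refine Finset.sum_congr rfl fun ω _ => ?_
  by_cases hb : g ω = b <;> simp [hb]

theorem ent_eq_neg_sum_mul_logb (q : Ω → ℝ) (f : Ω → α) :
    ent q f = -∑ ω, q ω * Real.logb 2 (pmass q f (f ω)) := by
  rw [ent, ← sum_mul_comp_eq_sum_pmass_mul q f fun a => Real.logb 2 (pmass q f a)]

theorem ent_congr [Fintype β] (q : Ω → ℝ) {f : Ω → α} {g : Ω → β}
    (h : ∀ ω ω', f ω = f ω' ↔ g ω = g ω') : ent q f = ent q g := by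
  simp only [ent_eq_neg_sum_mul_logb, pmass, h]

theorem ent_le_neg_sum_mul_logb (hq : ∀ ω, 0 ≤ q ω) (f : Ω → α) {r : α → ℝ} (hr : ∀ a, 0 ≤ r a)
    (hpos : ∀ ω, 0 < q ω → 0 < r (f ω)) (hsum : ∑ a, r a ≤ ∑ ω, q ω) :
    ent q f ≤ -∑ ω, q ω * Real.logb 2 (r (f ω)) := by
  have hpointwise (ω : Ω) : q ω * Real.logb 2 (r (f ω)) - q ω * Real.logb 2 (pmass q f (f ω)) ≤
      (q ω * (r (f ω) / pmass q f (f ω)) - q ω) / Real.log 2 := by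
    rcases (hq ω).eq_or_lt with hω | hω
    · simp [← hω]
    have hm := pmass_apply_pos hq f hω
    rw [← mul_sub, ← Real.logb_div (hpos ω hω).ne' hm.ne', Real.logb, ← mul_div_assoc,
      ← mul_sub_one]
    gcongr
    exact Real.log_le_sub_one_of_pos (div_pos (hpos ω hω) hm)
  have hratio : ∑ ω, q ω * (r (f ω) / pmass q f (f ω)) ≤ ∑ ω, q ω := by
    rw [sum_mul_comp_eq_sum_pmass_mul q f fun a => r a / pmass q f a]
    refine (Finset.sum_le_sum fun a _ => ?_).trans hsum
    rcases eq_or_ne (pmass q f a) 0 with ha | ha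
    · simpa [ha] using hr a
    · exact (mul_div_cancel₀ _ ha).le
  have htotal := Finset.sum_le_sum fun ω (_ : ω ∈ Finset.univ) => hpointwise ω
  rw [← Finset.sum_div, Finset.sum_sub_distrib, Finset.sum_sub_distrib] at htotal
  have hnonpos := htotal.trans
    (div_nonpos_of_nonpos_of_nonneg (sub_nonpos.mpr hratio) (Real.log_nonneg one_le_two))
  rw [ent_eq_neg_sum_mul_logb]
  linarith

end Mass

section CondIndep

variable {Ω α β γ : Type*} [Fintype Ω] [DecidableEq α] [DecidableEq β] [DecidableEq γ] {q : Ω → ℝ}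

/-- The mass function on `α × β × γ` with the same `(f, h)`- and `(g, h)`-marginals as
`(f, g, h)` that makes the first two coordinates conditionally independent given the third. For
`q ≥ 0` the numerator vanishes wherever the mass of `h` does, and `0 / 0 = 0` is the intended
value there. -/
def condIndepMass (q : Ω → ℝ) (f : Ω → α) (g : Ω → β) (h : Ω → γ) (x : α × β × γ) : ℝ :=
  pmass q (fun ω => (f ω, h ω)) (x.1, x.2.2) * pmass q (fun ω => (g ω, h ω)) (x.2.1, x.2.2) /
    pmass q h x.2.2

theorem condIndepMass_nonneg (hq : ∀ ω, 0 ≤ q ω) (f : Ω → α) (g : Ω → β) (h : Ω → γ)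
    (x : α × β × γ) : 0 ≤ condIndepMass q f g h x :=
  div_nonneg (mul_nonneg (pmass_nonneg hq _ _) (pmass_nonneg hq _ _)) (pmass_nonneg hq _ _)

theorem condIndepMass_apply_pos (hq : ∀ ω, 0 ≤ q ω) (f : Ω → α) (g : Ω → β) (h : Ω → γ) {ω : Ω}
    (hω : 0 < q ω) : 0 < condIndepMass q f g h (f ω, g ω, h ω) :=
  div_pos (mul_pos (pmass_apply_pos hq (fun ω => (f ω, h ω)) hω)
    (pmass_apply_pos hq (fun ω => (g ω, h ω)) hω)) (pmass_apply_pos hq h hω)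

theorem mul_logb_condIndepMass (hq : ∀ ω, 0 ≤ q ω) (f : Ω → α) (g : Ω → β) (h : Ω → γ) (ω : Ω) :
    q ω * Real.logb 2 (condIndepMass q f g h (f ω, g ω, h ω)) =
      q ω * Real.logb 2 (pmass q (fun ω => (f ω, h ω)) (f ω, h ω)) +
      q ω * Real.logb 2 (pmass q (fun ω => (g ω, h ω)) (g ω, h ω)) -
      q ω * Real.logb 2 (pmass q h (h ω)) := by
  rcases (hq ω).eq_or_lt with hω | hω
  · simp [← hω]
  have hfh := (pmass_apply_pos hq (fun ω => (f ω, h ω)) hω).ne'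
  have hgh := (pmass_apply_pos hq (fun ω => (g ω, h ω)) hω).ne'
  rw [condIndepMass, Real.logb_div (mul_ne_zero hfh hgh) (pmass_apply_pos hq h hω).ne',
    Real.logb_mul hfh hgh]
  ring

variable [Fintype α] [Fintype β] [Fintype γ]

theorem sum_condIndepMass (q : Ω → ℝ) (f : Ω → α) (g : Ω → β) (h : Ω → γ) :
    ∑ x, condIndepMass q f g h x = ∑ ω, q ω := by
  calc ∑ x, condIndepMass q f g h x
      = ∑ c, ∑ a, ∑ b, condIndepMass q f g h (a, b, c) := by
        simp only [Fintype.sum_prod_type]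
        rw [Finset.sum_congr rfl fun a _ => Finset.sum_comm, Finset.sum_comm]
    _ = ∑ c, pmass q h c * pmass q h c / pmass q h c := by
        simp only [condIndepMass, ← Finset.sum_div, ← Finset.mul_sum, ← Finset.sum_mul,
          sum_pmass_prodMk]
    _ = ∑ ω, q ω := by simp only [mul_self_div_self, sum_pmass]

theorem condEnt_prodMk_le (hq : ∀ ω, 0 ≤ q ω) (f : Ω → α) (g : Ω → β) (h : Ω → γ) :
    condEnt q f (fun ω => (g ω, h ω)) ≤ condEnt q f h := by
  have hgibbs := ent_le_neg_sum_mul_logb hq (fun ω => (f ω, g ω, h ω))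
    (condIndepMass_nonneg hq f g h) (fun _ => condIndepMass_apply_pos hq f g h)
    (sum_condIndepMass q f g h).le
  simp only [mul_logb_condIndepMass hq, Finset.sum_sub_distrib, Finset.sum_add_distrib] at hgibbs
  simp only [condEnt, ent_eq_neg_sum_mul_logb q (fun ω => (f ω, h ω)),
    ent_eq_neg_sum_mul_logb q (fun ω => (g ω, h ω)), ent_eq_neg_sum_mul_logb q h]
  linarith

end CondIndep

section Conditional

variable {Ω α β γ δ : Type*} [Fintype Ω] [Fintype α] [DecidableEq α] [Fintype β] [DecidableEq β]
  [Fintype γ] [DecidableEq γ] [Fintype δ] [DecidableEq δ] {q : Ω → ℝ}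

theorem condEnt_congr_right (q : Ω → ℝ) (f : Ω → α) {g : Ω → β} {h : Ω → γ}
    (hgh : ∀ ω ω', g ω = g ω' ↔ h ω = h ω') : condEnt q f g = condEnt q f h := by
  rw [condEnt, condEnt, ent_congr q hgh, ent_congr q (g := fun ω => (f ω, h ω))]
  simp only [Prod.mk.injEq, hgh, implies_true]

theorem condEnt_le_of_factorsThrough (hq : ∀ ω, 0 ≤ q ω) (f : Ω → α) {g : Ω → β} {h : Ω → γ}
    (hhg : h.FactorsThrough g) : condEnt q f g ≤ condEnt q f h :=
  calc condEnt q f g = condEnt q f (fun ω => (g ω, h ω)) :=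
        condEnt_congr_right q f fun ω ω' => by
          simpa only [Prod.mk.injEq, iff_self_and] using @hhg ω ω'
    _ ≤ condEnt q f h := condEnt_prodMk_le hq f g h

theorem mutInf_add_condMutInf (q : Ω → ℝ) (x : Ω → α) (a : Ω → β) (y : Ω → γ) (u : Ω → δ) :
    mutInf q x a + condMutInf q x u (fun ω => (y ω, a ω)) =
      ent q x + condEnt q y (fun ω => (a ω, x ω)) - condEnt q y a -
        condEnt q x (fun ω => (u ω, y ω, a ω)) := by
  have hxya : ent q (fun ω => (x ω, y ω, a ω)) = ent q (fun ω => (y ω, a ω, x ω)) :=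
    ent_congr q fun ω ω' => by simp only [Prod.mk.injEq]; tauto
  have hxa : ent q (fun ω => (x ω, a ω)) = ent q (fun ω => (a ω, x ω)) :=
    ent_congr q fun ω ω' => by simp only [Prod.mk.injEq]; tauto
  simp only [mutInf, condMutInf, condEnt, hxya, hxa]
  ring

theorem ent_add_condEnt_eq_of_factorsThrough (q : Ω → ℝ) {x : Ω → α} {a : Ω → β} (y : Ω → γ)
    {t : Ω → δ} (ht : t.FactorsThrough x) (ha : a.FactorsThrough t) :
    ent q x + condEnt q y (fun ω => (a ω, x ω)) =
      ent q t + condEnt q y t + condEnt q x (fun ω => (y ω, t ω)) := by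
  have hax : ent q (fun ω => (a ω, x ω)) = ent q x :=
    ent_congr q fun ω ω' => by
      simpa only [Prod.mk.injEq, and_iff_right_iff_imp] using fun h => ha (ht h)
  have hjoint : ent q (fun ω => (y ω, a ω, x ω)) = ent q (fun ω => (x ω, y ω, t ω)) :=
    ent_congr q fun ω ω' => by
      have := @ht ω ω'
      have := @ha ω ω'
      simp only [Prod.mk.injEq]
      tauto
  simp only [condEnt, hax, hjoint]
  ring

end Conditional

section Families

variable {Ω : Type*} {n : ℕ} {α : Fin n → Type*}

/-- The initial segment `X^k` of a family: its components with (zero-based) index below `k`. -/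
def initCoords (X : ∀ i, Ω → α i) (k : ℕ) (ω : Ω) : ∀ j : {j : Fin n // j.1 < k}, α j :=
  fun j => X j.1 ω

/-- The family `X^{n∖i}`: all components except the `i`-th. -/
def omitCoord (X : ∀ i, Ω → α i) (i : Fin n) (ω : Ω) : ∀ j : {j : Fin n // j ≠ i}, α j :=
  fun j => X j.1 ω

theorem initCoords_eq_iff {X : ∀ i, Ω → α i} {k : ℕ} {ω ω' : Ω} :
    initCoords X k ω = initCoords X k ω' ↔ ∀ j : Fin n, j.1 < k → X j ω = X j ω' := by
  simp only [initCoords, funext_iff, Subtype.forall]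

theorem initCoords_succ_eq_iff {X : ∀ i, Ω → α i} {i : Fin n} {ω ω' : Ω} :
    initCoords X (i.1 + 1) ω = initCoords X (i.1 + 1) ω' ↔
      X i ω = X i ω' ∧ initCoords X i.1 ω = initCoords X i.1 ω' := by
  simp only [initCoords_eq_iff, Nat.lt_succ_iff_lt_or_eq, or_imp, forall_and, Fin.val_inj,
    forall_eq, and_comm]

theorem apply_and_omitCoord_eq_iff {X : ∀ i, Ω → α i} {i : Fin n} {ω ω' : Ω} :
    X i ω = X i ω' ∧ omitCoord X i ω = omitCoord X i ω' ↔
      (fun j => X j ω) = (fun j => X j ω') := by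
  simp only [omitCoord, funext_iff, Subtype.forall]
  refine ⟨fun ⟨hi, hne⟩ j => ?_, fun h => ⟨h i, fun j _ => h j⟩⟩
  obtain rfl | hj := eq_or_ne j i
  exacts [hi, hne j hj]

variable [Fintype Ω] [∀ i, Fintype (α i)] [∀ i, DecidableEq (α i)] {q : Ω → ℝ}
  {ζ : Type*} [Fintype ζ] [DecidableEq ζ]

theorem condEnt_pi_eq_sum (q : Ω → ℝ) (X : ∀ i, Ω → α i) (Z : Ω → ζ) :
    condEnt q (fun ω i => X i ω) Z =
      ∑ i : Fin n, condEnt q (X i) (fun ω => (initCoords X i.1 ω, Z ω)) := by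
  let H (k : ℕ) : ℝ := ent q fun ω => (initCoords X k ω, Z ω)
  have hstep (i : Fin n) :
      condEnt q (X i) (fun ω => (initCoords X i.1 ω, Z ω)) = H (i.1 + 1) - H i.1 := by
    rw [condEnt, sub_left_inj]
    refine ent_congr q fun ω ω' => ?_
    simp only [Prod.mk.injEq, initCoords_succ_eq_iff, and_assoc]
  have hzero : H 0 = ent q Z :=
    ent_congr q fun ω ω' => by simp [initCoords_eq_iff]
  have hlast : H n = ent q fun ω => (fun i => X i ω, Z ω) :=
    ent_congr q fun ω ω' => by
      simp only [Prod.mk.injEq, initCoords_eq_iff, Fin.is_lt, forall_const]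
      rw [funext_iff]
  simp only [hstep]
  rw [Fin.sum_univ_eq_sum_range (fun k => H (k + 1) - H k) n, Finset.sum_range_sub, hzero, hlast,
    condEnt]

theorem condEnt_pi_le_sum {β : Fin n → Type*} [∀ i, Fintype (β i)] [∀ i, DecidableEq (β i)]
    (hq : ∀ ω, 0 ≤ q ω) (X : ∀ i, Ω → α i) {Z : Ω → ζ} {W : ∀ i, Ω → β i}
    (hW : ∀ i, (W i).FactorsThrough Z) :
    condEnt q (fun ω i => X i ω) Z ≤ ∑ i, condEnt q (X i) (W i) := by
  rw [condEnt_pi_eq_sum]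
  gcongr with i
  exact condEnt_le_of_factorsThrough hq (X i) fun ω ω' h => hW i (Prod.ext_iff.mp h).2

end Families

theorem ent_pi_eq_sum_of_pmass_eq_prod {Ω ι : Type*} [Fintype Ω] [Fintype ι] [DecidableEq ι]
    {α : ι → Type*} [∀ i, Fintype (α i)] [∀ i, DecidableEq (α i)] {q : Ω → ℝ} (hq : ∀ ω, 0 ≤ q ω)
    {X : ∀ i, Ω → α i}
    (hindep : ∀ x : ∀ i, α i, pmass q (fun ω i => X i ω) x = ∏ i, pmass q (X i) (x i)) :
    ent q (fun ω i => X i ω) = ∑ i, ent q (X i) := by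
  simp only [ent_eq_neg_sum_mul_logb, hindep]
  rw [Finset.sum_neg_distrib, Finset.sum_comm]
  refine congrArg Neg.neg (Finset.sum_congr rfl fun ω _ => ?_)
  rcases (hq ω).eq_or_lt with hω | hω
  · simp [← hω]
  · rw [Real.logb_prod _ _ fun i _ => (pmass_apply_pos hq (X i) hω).ne', Finset.mul_sum]

section Converse

variable {Ω 𝒯 : Type*} {n : ℕ} {𝒳 𝒜 𝒴 : Fin n → Type*}

/-- The auxiliary variable `Uᵢ = (A^{n∖i}, Y^{n∖i}, X^{i-1}, T)`. -/
def auxVar (X : ∀ i, Ω → 𝒳 i) (A : ∀ i, Ω → 𝒜 i) (Y : ∀ i, Ω → 𝒴 i) (T : Ω → 𝒯) (i : Fin n)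
    (ω : Ω) : (∀ j : {j : Fin n // j ≠ i}, 𝒜 j) × (∀ j : {j : Fin n // j ≠ i}, 𝒴 j) ×
      (∀ j : {j : Fin n // j.1 < i.1}, 𝒳 j) × 𝒯 :=
  (omitCoord A i ω, omitCoord Y i ω, initCoords X i.1 ω, T ω)

theorem auxVar_prodMk_eq_iff (X : ∀ i, Ω → 𝒳 i) {A : ∀ i, Ω → 𝒜 i} (Y : ∀ i, Ω → 𝒴 i)
    {T : Ω → 𝒯} (hA : ∀ i, (A i).FactorsThrough T) (i : Fin n) (ω ω' : Ω) :
    (auxVar X A Y T i ω, Y i ω, A i ω) = (auxVar X A Y T i ω', Y i ω', A i ω') ↔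
      (initCoords X i.1 ω, (fun j => Y j ω), T ω) =
        (initCoords X i.1 ω', (fun j => Y j ω'), T ω') := by
  have hAi := @hA i ω ω'
  have hAomit (h : T ω = T ω') : omitCoord A i ω = omitCoord A i ω' :=
    funext fun j => hA j.1 h
  simp only [auxVar, Prod.mk.injEq, ← apply_and_omitCoord_eq_iff (X := Y) (i := i)]
  tauto

variable [Fintype Ω] [Fintype 𝒯] [DecidableEq 𝒯]
  [∀ i, Fintype (𝒳 i)] [∀ i, DecidableEq (𝒳 i)] [∀ i, Fintype (𝒜 i)] [∀ i, DecidableEq (𝒜 i)]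
  [∀ i, Fintype (𝒴 i)] [∀ i, DecidableEq (𝒴 i)]

theorem mutInf_add_condMutInf_auxVar (q : Ω → ℝ) (X : ∀ i, Ω → 𝒳 i) {A : ∀ i, Ω → 𝒜 i}
    (Y : ∀ i, Ω → 𝒴 i) {T : Ω → 𝒯} (hA : ∀ i, (A i).FactorsThrough T) (i : Fin n) :
    mutInf q (X i) (A i) + condMutInf q (X i) (auxVar X A Y T i) (fun ω => (Y i ω, A i ω)) =
      ent q (X i) + condEnt q (Y i) (fun ω => (A i ω, X i ω)) - condEnt q (Y i) (A i) -
        condEnt q (X i) (fun ω => (initCoords X i.1 ω, (fun j => Y j ω), T ω)) := by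
  rw [mutInf_add_condMutInf, condEnt_congr_right q (X i) (auxVar_prodMk_eq_iff X Y hA i)]

theorem converse_chain_decoder_actions_general {p : Ω → ℝ} (hp : ∀ ω, 0 ≤ p ω)
    (X : ∀ i, Ω → 𝒳 i) (A : ∀ i, Ω → 𝒜 i) (Y : ∀ i, Ω → 𝒴 i) (T : Ω → 𝒯)
    (hindep : ∀ x : ∀ i, 𝒳 i, pmass p (fun ω i => X i ω) x = ∏ i, pmass p (X i) (x i))
    (hT : T.FactorsThrough fun ω i => X i ω) (hA : ∀ i, (A i).FactorsThrough T)
    (hY : condEnt p (fun ω i => Y i ω) (fun ω => ((fun i => A i ω), (fun i => X i ω))) =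
      ∑ i, condEnt p (Y i) (fun ω => (A i ω, X i ω))) :
    ∑ i, (mutInf p (X i) (A i) +
      condMutInf p (X i) (auxVar X A Y T i) (fun ω => (Y i ω, A i ω))) ≤ ent p T := by
  have hA_pi : (fun ω i => A i ω).FactorsThrough T := fun _ _ h => funext fun i => hA i h
  calc ∑ i, (mutInf p (X i) (A i) +
        condMutInf p (X i) (auxVar X A Y T i) (fun ω => (Y i ω, A i ω)))
      = ent p (fun ω i => X i ω) +
          condEnt p (fun ω i => Y i ω) (fun ω => ((fun i => A i ω), (fun i => X i ω))) -
          ∑ i, condEnt p (Y i) (A i) -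
          condEnt p (fun ω i => X i ω) (fun ω => ((fun i => Y i ω), T ω)) := by
        simp only [mutInf_add_condMutInf_auxVar p X Y hA, Finset.sum_sub_distrib,
          Finset.sum_add_distrib, ent_pi_eq_sum_of_pmass_eq_prod hp hindep, hY,
          condEnt_pi_eq_sum p X]
    _ ≤ ent p (fun ω i => X i ω) +
          condEnt p (fun ω i => Y i ω) (fun ω => ((fun i => A i ω), (fun i => X i ω))) -
          condEnt p (fun ω i => Y i ω) T -
          condEnt p (fun ω i => X i ω) (fun ω => ((fun i => Y i ω), T ω)) := by
        gcongr
        exact condEnt_pi_le_sum hp Y hA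
    _ = ent p T := by
        rw [ent_add_condEnt_eq_of_factorsThrough p (fun ω i => Y i ω) hT hA_pi]
        ring

end Converse

/-- Let `X₁,…,Xₙ` be mutually independent, `T` a deterministic function of
`Xⁿ`, `Aⁿ` a deterministic function of `T`, and suppose
`H(Yⁿ|(Aⁿ,Xⁿ)) = ∑ᵢ H(Yᵢ|(Aᵢ,Xᵢ))` (memoryless side-information channel). Then
`H(T) ≥ ∑ᵢ [ I(Xᵢ;Aᵢ) + I(Xᵢ;Uᵢ|Yᵢ,Aᵢ) ]` where
`Uᵢ = (A^{n∖i}, Y^{n∖i}, X^{i−1}, T)`. -/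
theorem converse_chain_decoder_actions {Ω 𝒳 𝒜 𝒴 𝒯 : Type*} [Fintype Ω]
    [Fintype 𝒳] [DecidableEq 𝒳] [Fintype 𝒜] [DecidableEq 𝒜]
    [Fintype 𝒴] [DecidableEq 𝒴] [Fintype 𝒯] [DecidableEq 𝒯]
    (p : Ω → ℝ) (hp : IsPMF p) {n : ℕ}
    (X : Fin n → Ω → 𝒳) (A : Fin n → Ω → 𝒜) (Y : Fin n → Ω → 𝒴) (T : Ω → 𝒯)
    (hindep : ∀ xs : Fin n → 𝒳,
      pmass p (fun ω => (fun i => X i ω)) xs = ∏ i, pmass p (X i) (xs i))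
    (hT : ∃ φ : (Fin n → 𝒳) → 𝒯, ∀ ω, T ω = φ (fun i => X i ω))
    (hA : ∃ ψ : 𝒯 → Fin n → 𝒜, ∀ ω i, A i ω = ψ (T ω) i)
    (hY : condEnt p (fun ω => (fun i => Y i ω))
        (fun ω => ((fun i => A i ω), (fun i => X i ω))) =
      ∑ i, condEnt p (Y i) (fun ω => (A i ω, X i ω))) :
    ent p T ≥ ∑ i, (mutInf p (X i) (A i) +
      condMutInf p (X i)
        (fun ω => ((fun j : {j : Fin n // j ≠ i} => A j.1 ω),
                   (fun j : {j : Fin n // j ≠ i} => Y j.1 ω),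
                   (fun j : {j : Fin n // j.1 < i} => X j.1 ω), T ω))
        (fun ω => (Y i ω, A i ω))) := by
  obtain ⟨φ, hφ⟩ := hT
  obtain ⟨ψ, hψ⟩ := hA
  exact converse_chain_decoder_actions_general hp.1 X A Y T hindep
    (fun ω ω' h => by simpa only [hφ] using congrArg φ h)
    (fun i ω ω' h => by simp only [hψ, h]) hY
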